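/- Let G be a connected graph of diameter at most d, and let F be a set of at most k edges of G such that G − F is connected. Then the diameter of G − F is at most (k+1)·d. -/

import Mathlib

structure PM (δ : ℝ → ℝ → ℝ) : Prop where
  refl : ∀ x, δ x x = 0
  symm : ∀ x y, δ x y = δ y x
  tri : ∀ x y z, δ x z ≤ δ x y + δ y z
  nn : ∀ x y, 0 ≤ δ x y
  le : ∀ x y, δ x y ≤ |x - y|

theorem PM_glue {δ : ℝ → ℝ → ℝ} (h : PM δ) (a b s : ℝ) (S : Finset ℝ)
    (hS : ∀ p ∈ S, ∀ q ∈ S, p ≠ q → s ≤ δ p q) :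
    ∃ δ' : ℝ → ℝ → ℝ, PM δ' ∧ (∀ x y, δ' x y ≤ δ x y) ∧ δ' a b ≤ 0 ∧
      ∃ r : ℝ, ∀ p ∈ S.erase r, ∀ q ∈ S.erase r, p ≠ q → s ≤ δ' p q := by
  refine ⟨fun x y => min (δ x y) (min (δ x a + δ b y) (δ y a + δ b x)),
    ⟨?_, ?_, ?_, ?_, ?_⟩, ?_, ?_, ?_⟩
  · intro x
    have := h.nn x a; have := h.nn b x
    simp only [h.refl]
    rw [min_eq_left]
    exact le_min (by linarith) (by linarith)
  · intro x y
    simp only [h.symm x y]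
    rw [min_comm (δ x a + δ b y)]
  · intro x y z
    have h1 := h.tri x y z
    have h2 := h.tri x y a
    have h3 := h.tri z y a
    have h4 := h.tri b y z
    have h5 := h.tri b y x
    have h6 := h.nn y a
    have h7 := h.nn b y
    have s1 := h.symm x y
    have s2 := h.symm z y
    have h8 := h.tri x a z
    have h9 := h.tri x b z
    have s3 := h.symm x b
    have s4 := h.symm z a
    have h10 := h.nn x a
    have h11 := h.nn z a
    have h12 := h.nn b x
    have h13 := h.nn b z
    have m1 := min_le_left (δ x z) (min (δ x a + δ b z) (δ z a + δ b x))
    have m2 := (min_le_right (δ x z) (min (δ x a + δ b z) (δ z a + δ b x))).trans (min_le_left _ _)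
    have m3 := (min_le_right (δ x z) (min (δ x a + δ b z) (δ z a + δ b x))).trans (min_le_right _ _)
    rcases min_choice (δ x y) (min (δ x a + δ b y) (δ y a + δ b x)) with e | e <;>
    rcases min_choice (δ x a + δ b y) (δ y a + δ b x) with e' | e' <;>
    rcases min_choice (δ y z) (min (δ y a + δ b z) (δ z a + δ b y)) with g | g <;>
    rcases min_choice (δ y a + δ b z) (δ z a + δ b y) with g' | g' <;>
    rw [e, g] <;> (try rw [e']) <;> (try rw [g']) <;> linarith
  · intro x y
    have := h.nn x a; have := h.nn b y; have := h.nn y a; have := h.nn b x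
    exact le_min (h.nn x y) (le_min (by linarith) (by linarith))
  · intro x y
    exact (min_le_left _ _).trans (h.le x y)
  · intro x y
    exact min_le_left _ _
  · refine (min_le_right _ _).trans ((min_le_left _ _).trans ?_)
    simp [h.refl]
  · have key : ∀ p ∈ S, ∀ q ∈ S, ∀ p' ∈ S, ∀ q' ∈ S,
        δ p a + δ b q < s → δ p' a + δ b q' < s → p = p' ∨ q = q' := by
      intro p hp q hq p' hp' q' hq' h1 h2
      by_contra! hc
      have := hS p hp p' hp' hc.1
      have := hS q hq q' hq' hc.2
      have := h.tri p a p'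
      have := h.tri q b q'
      have := h.symm a p'
      have := h.symm q b
      linarith
    have cover : ∃ r, ∀ p ∈ S, ∀ q ∈ S, δ p a + δ b q < s → p = r ∨ q = r := by
      by_cases h0 : ∃ p0 ∈ S, ∃ q0 ∈ S, δ p0 a + δ b q0 < s
      · obtain ⟨p0, hp0, q0, hq0, b0⟩ := h0
        by_cases h1 : ∃ p1 ∈ S, ∃ q1 ∈ S, δ p1 a + δ b q1 < s ∧ p1 ≠ p0
        · obtain ⟨p1, hp1, q1, hq1, b1, hne⟩ := h1
          refine ⟨q0, fun p hp q hq hb => ?_⟩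
          have k1 := key p1 hp1 q1 hq1 p0 hp0 q0 hq0 b1 b0
          have k2 := key p hp q hq p0 hp0 q0 hq0 hb b0
          have k3 := key p hp q hq p1 hp1 q1 hq1 hb b1
          grind
        · push Not at h1
          exact ⟨p0, fun p hp q hq hb => Or.inl (h1 p hp q hq hb)⟩
      · push Not at h0
        exact ⟨0, fun p hp q hq hb => absurd hb (not_lt.2 (h0 p hp q hq))⟩
    obtain ⟨r, hr⟩ := cover
    refine ⟨r, fun p hp q hq hne => ?_⟩
    rw [Finset.mem_erase] at hp hq
    refine le_min (hS p hp.2 q hq.2 hne) (le_min ?_ ?_)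
    · by_contra! hc
      rcases hr p hp.2 q hq.2 hc with h | h
      exacts [hp.1 h, hq.1 h]
    · by_contra! hc
      rcases hr q hq.2 p hp.2 hc with h | h
      exacts [hq.1 h, hp.1 h]

theorem PM_exists {V : Type*} (f : V → ℝ) (s : ℝ) (S : Finset ℝ)
    (hS : ∀ p ∈ S, ∀ q ∈ S, p ≠ q → s ≤ |p - q|) (F : Finset (Sym2 V)) :
    ∃ δ : ℝ → ℝ → ℝ, PM δ ∧ (∀ x y, s(x, y) ∈ F → δ (f x) (f y) ≤ 0) ∧
      ∃ T ⊆ S, S.card ≤ T.card + F.card ∧ ∀ p ∈ T, ∀ q ∈ T, p ≠ q → s ≤ δ p q := by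
  classical
  induction F using Finset.induction_on with
  | empty =>
    refine ⟨fun x y => |x - y|, ⟨by simp, fun x y => abs_sub_comm x y,
      fun x y z => abs_sub_le x y z, fun x y => abs_nonneg _, fun x y => le_rfl⟩,
      by simp, S, subset_rfl, by simp, hS⟩
  | insert e F he ih =>
    obtain ⟨δ, h, h0, T, hT, hc, hs⟩ := ih
    induction e using Sym2.ind with
    | _ x y =>
    obtain ⟨δ', h', hle, hab, r, hr⟩ := PM_glue h (f x) (f y) s T hs
    refine ⟨δ', h', ?_, T.erase r, (Finset.erase_subset _ _).trans hT, ?_, hr⟩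
    · intro x' y' hm
      rcases Finset.mem_insert.1 hm with hm | hm
      · rcases Sym2.eq_iff.1 hm with ⟨rfl, rfl⟩ | ⟨rfl, rfl⟩
        · exact hab
        · rw [h'.symm]; exact hab
      · exact (hle _ _).trans (h0 _ _ hm)
    · rw [Finset.card_insert_of_notMem he]
      have := Finset.pred_card_le_card_erase (s := T) (a := r)
      omega

theorem walk_bound {V : Type*} (G : SimpleGraph V) (F : Finset (Sym2 V)) (f : V → ℝ)
    (hf : ∀ x y, (G.deleteEdges ↑F).Adj x y → |f x - f y| ≤ 1)
    (δ : ℝ → ℝ → ℝ) (h : PM δ) (h0 : ∀ x y, s(x, y) ∈ F → δ (f x) (f y) ≤ 0)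
    {x y : V} (w : G.Walk x y) :
    δ (f x) (f y) ≤ (w.length : ℝ) - 1 ∨ |f x - f y| ≤ w.length := by
  induction w with
  | nil => right; simp
  | @cons x z y hxz w ih =>
    rw [SimpleGraph.Walk.length_cons]
    push_cast
    have ht := h.tri (f x) (f z) (f y)
    have hle := h.le (f z) (f y)
    by_cases hm : s(x, z) ∈ F
    · have := h0 _ _ hm
      left
      rcases ih with ih | ih <;> linarith
    · have h1 := hf x z (by rw [SimpleGraph.deleteEdges_adj]; exact ⟨hxz, by simpa using hm⟩)
      have := h.le (f x) (f z)
      rcases ih with ih | ih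
      · left; linarith
      · right
        have := abs_sub_le (f x) (f z) (f y)
        linarith

theorem round_pair (p q : ℝ) (d L : ℕ) (hp : 0 ≤ p) (hpq : (d : ℝ) < q - p) (hq : q ≤ L) :
    ∃ x y : ℕ, x ≤ L ∧ y ≤ L ∧ (d : ℝ) < (y : ℝ) - x ∧ |p - x| + |q - y| ≤ 1 := by
  have hd : (0 : ℝ) ≤ d := Nat.cast_nonneg d
  have hq0 : 0 ≤ q := by linarith
  have a1 := Nat.floor_le hp
  have a2 := Nat.lt_floor_add_one p
  have b1 := Nat.floor_le hq0
  have b2 := Nat.lt_floor_add_one q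
  have hqL : ⌊q⌋₊ ≤ L := Nat.floor_le_of_le hq
  have hpL : ⌊p⌋₊ ≤ L := Nat.floor_le_of_le (by linarith)
  have up : ∀ r : ℝ, r ≤ L → (⌊r⌋₊ : ℝ) < r → ⌊r⌋₊ + 1 ≤ L := by
    intro r hr h
    have : (⌊r⌋₊ : ℝ) < L := by linarith
    exact_mod_cast this
  by_cases c0 : p - ⌊p⌋₊ + (q - ⌊q⌋₊) ≤ 1 ∧ q - ⌊q⌋₊ ≤ p - ⌊p⌋₊
  · refine ⟨⌊p⌋₊, ⌊q⌋₊, hpL, hqL, by linarith, ?_⟩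
    rw [abs_of_nonneg (by linarith), abs_of_nonneg (by linarith)]; linarith
  by_cases c1 : q - ⌊q⌋₊ ≤ p - ⌊p⌋₊
  · have c2 : 1 < p - ⌊p⌋₊ + (q - ⌊q⌋₊) := by
      by_contra! hc; exact c0 ⟨hc, c1⟩
    refine ⟨⌊p⌋₊ + 1, ⌊q⌋₊ + 1, up p (by linarith) (by linarith), up q hq (by linarith), ?_, ?_⟩
    · push_cast; linarith
    · push_cast
      rw [abs_of_nonpos (by linarith), abs_of_nonpos (by linarith)]; linarith
  · push Not at c1
    refine ⟨⌊p⌋₊, ⌊q⌋₊ + 1, hpL, up q hq (by linarith), ?_, ?_⟩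
    · push_cast; linarith
    · push_cast
      rw [abs_of_nonneg (by linarith), abs_of_nonpos (by linarith)]; linarith

theorem exists_level {V : Type*} (H : SimpleGraph V) (hH : H.Connected) (u v : V) (i : ℕ)
    (hi : i ≤ H.dist u v) : ∃ x, H.dist u x = i := by
  obtain ⟨w, hw⟩ := hH.exists_walk_length_eq_dist u v
  refine ⟨w.getVert i, ?_⟩
  have h1 := SimpleGraph.dist_le (w.take i)
  have h2 := SimpleGraph.dist_le (w.drop i)
  have h3 := hH.dist_triangle (u := u) (v := w.getVert i) (w := v)
  rw [SimpleGraph.Walk.take_length] at h1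
  rw [SimpleGraph.Walk.drop_length] at h2
  omega

theorem diam_deleteEdges_le {V : Type*} (G : SimpleGraph V) (k d : ℕ)
    (hk : 0 < k) (hd : 0 < d) (hconn : G.Connected)
    (hdiam : ∀ u v : V, G.dist u v ≤ d)
    (F : Finset (Sym2 V)) (hF : ↑F ⊆ G.edgeSet) (hcard : F.card ≤ k)
    (hconn' : (G.deleteEdges ↑F).Connected) :
    ∀ u v : V, (G.deleteEdges ↑F).dist u v ≤ (k + 1) * d := by
  intro u v
  by_contra! hL
  set H := G.deleteEdges (↑F : Set (Sym2 V)) with hH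
  set L := H.dist u v with hLdef
  set f : V → ℝ := fun x => (H.dist u x : ℝ) with hfdef
  have hk1 : (0 : ℝ) < (k : ℝ) + 1 := by positivity
  set s : ℝ := (L : ℝ) / (k + 1) with hs
  have hsd : (d : ℝ) < s := by
    rw [hs, lt_div_iff₀ hk1]
    have : (((k + 1) * d : ℕ) : ℝ) < L := by exact_mod_cast hL
    push_cast at this
    linarith
  have hs0 : 0 < s := lt_of_le_of_lt (Nat.cast_nonneg d) hsd
  have hinj : Function.Injective (fun i : ℕ => (i : ℝ) * s) := by
    intro i j hij
    have := mul_right_cancel₀ hs0.ne' hij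
    exact_mod_cast this
  have hf : ∀ x y, H.Adj x y → |f x - f y| ≤ 1 := by
    intro x y hxy
    have e1 := hconn'.dist_triangle (u := u) (v := x) (w := y)
    have e2 := hconn'.dist_triangle (u := u) (v := y) (w := x)
    rw [SimpleGraph.dist_eq_one_iff_adj.2 hxy] at e1
    rw [SimpleGraph.dist_eq_one_iff_adj.2 hxy.symm] at e2
    have e1' : f y ≤ f x + 1 := by simp only [hfdef]; exact_mod_cast e1
    have e2' : f x ≤ f y + 1 := by simp only [hfdef]; exact_mod_cast e2
    rw [abs_le]; constructor <;> linarith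
  obtain ⟨δ, h, h0, T, hT, hc, hsep⟩ := PM_exists f s
    ((Finset.range (k + 2)).map ⟨_, hinj⟩) (by
      intro p hp q hq hne
      simp only [Finset.mem_map, Function.Embedding.coeFn_mk] at hp hq
      obtain ⟨i, -, rfl⟩ := hp
      obtain ⟨j, -, rfl⟩ := hq
      have hij : (i : ℤ) - j ≠ 0 := by
        intro hz
        apply hne
        have : i = j := by omega
        rw [this]
      have h1 : (1 : ℝ) ≤ |(i : ℝ) - j| := by
        have := Int.one_le_abs hij
        exact_mod_cast this
      rw [← sub_mul, abs_mul, abs_of_pos hs0]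
      nlinarith) F
  rw [Finset.card_map, Finset.card_range] at hc
  have hrange : ∀ p ∈ T, 0 ≤ p ∧ p ≤ L := by
    intro p hp
    have := hT hp
    simp only [Finset.mem_map, Function.Embedding.coeFn_mk, Finset.mem_range] at this
    obtain ⟨i, hi, rfl⟩ := this
    refine ⟨by positivity, ?_⟩
    have hi' : (i : ℝ) ≤ k + 1 := by
      have : i ≤ k + 1 := by omega
      exact_mod_cast this
    have : ((k : ℝ) + 1) * s = L := by rw [hs]; field_simp
    nlinarith
  have hex : ∃ p ∈ T, ∃ q ∈ T, p < q := by
    obtain ⟨p, hp, q, hq, hne⟩ := Finset.one_lt_card.1 (show 1 < T.card by omega)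
    rcases lt_or_gt_of_ne hne with hlt | hlt
    exacts [⟨p, hp, q, hq, hlt⟩, ⟨q, hq, p, hp, hlt⟩]
  obtain ⟨p, hp, q, hq, hlt⟩ := hex
  have hδ := hsep p hp q hq hlt.ne
  have hle := h.le p q
  rw [abs_of_neg (by linarith)] at hle
  obtain ⟨x, y, hx, hy, hxy, hr⟩ := round_pair p q d L (hrange p hp).1 (by linarith) (hrange q hq).2
  obtain ⟨x', hx'⟩ := exists_level H hconn' u v x hx
  obtain ⟨y', hy'⟩ := exists_level H hconn' u v y hy
  obtain ⟨w, hw⟩ := hconn.exists_walk_length_eq_dist x' y'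
  have hwd : (w.length : ℝ) ≤ d := by
    have := hdiam x' y'
    rw [← hw] at this
    exact_mod_cast this
  have hfx : f x' = x := by simp only [hfdef, hx']
  have hfy : f y' = y := by simp only [hfdef, hy']
  have hb := walk_bound G F f hf δ h h0 w
  rw [hfx, hfy] at hb
  rcases hb with hb | hb
  · have t1 := h.tri p x q
    have t2 := h.tri x y q
    have l1 := h.le p x
    have l2 := h.le q y
    have s1 := h.symm q y
    linarith
  · rw [abs_le] at hb
    linarith [hb.1]
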